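/- arXiv:2103.07192 — 2 statements merged into one kernel-verified Lean document; each statement's English description precedes it below -/
import Mathlib

section
/- Let c₀, C₀ > 0 with c₀ < 1. For any X > 0, any A > 0 and any twice continuously differentiable function φ : ℝ → ℝ such that |φ'(t)| ≤ c₀·A and |φ''(t)| ≤ C₀·A/X for all t ∈ [−X, X], one has |∫_{−X}^{X} e(φ(t) − At) dt| ≤ (C₀ + 1 − c₀) / ((1 − c₀)² · π · A). -/
/-! The phase `ψ(t) = φ(t) - A t` has `|ψ'| ≥ (1 - c₀) A` on `[-X, X]`, so there is no stationary
point and one integration by parts suffices: `e(ψ) / (2πi ψ')` has derivative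
`e(ψ) - e(ψ) φ'' / (2πi ψ'²)`. The boundary terms contribute at most `1 / (π (1 - c₀) A)`, and the
remaining integral, over an interval of length `2X`, at most `C₀ / (π (1 - c₀)² A)`. -/

open MeasureTheory

noncomputable def e (θ : ℝ) : ℂ := Complex.exp (2 * Real.pi * Complex.I * θ)

lemma norm_e (θ : ℝ) : ‖e θ‖ = 1 := by
  have h : (2 * Real.pi * Complex.I * θ : ℂ) = ((2 * Real.pi * θ : ℝ) : ℂ) * Complex.I := by
    push_cast; ring
  rw [e, h, Complex.norm_exp_ofReal_mul_I]

lemma hasDerivAt_e_comp {f : ℝ → ℝ} {f' t : ℝ} (h : HasDerivAt f f' t) :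
    HasDerivAt (fun s => e (f s)) (e (f t) * (2 * Real.pi * Complex.I * f')) t :=
  (h.ofReal_comp.const_mul (2 * Real.pi * Complex.I : ℂ)).cexp

theorem stmt8 (c₀ C₀ : ℝ) (hc₀ : 0 < c₀) (hC₀ : 0 < C₀) (hc₀1 : c₀ < 1)
    (X A : ℝ) (hX : 0 < X) (hA : 0 < A)
    (φ : ℝ → ℝ) (hφ : ContDiff ℝ 2 φ)
    (h1 : ∀ t ∈ Set.Icc (-X) X, |deriv φ t| ≤ c₀ * A)
    (h2 : ∀ t ∈ Set.Icc (-X) X, |deriv (deriv φ) t| ≤ C₀ * A / X) :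
    ‖∫ t in (-X)..X, e (φ t - A * t)‖ ≤
      (C₀ + 1 - c₀) / ((1 - c₀) ^ 2 * Real.pi * A) := by
  have hpi := Real.pi_pos
  have hc : 0 < 1 - c₀ := by linarith
  have hX' : -X ≤ X := by linarith
  have hφ1 : ContDiff ℝ 1 (deriv φ) := ((contDiff_succ_iff_deriv (n := 1)).1 hφ).2.2
  have hcont1 : Continuous (deriv φ) := hφ1.continuous
  have hcont2 : Continuous (deriv (deriv φ)) := hφ1.continuous_deriv le_rfl
  have hd0 (t : ℝ) : HasDerivAt (fun s => φ s - A * s) (deriv φ t - A) t := by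
    have h := (hφ.differentiable (by norm_num) t).hasDerivAt.fun_sub
      ((hasDerivAt_id t).const_mul A)
    rw [mul_one] at h
    exact h
  have hd1 (t : ℝ) : HasDerivAt (fun s => deriv φ s - A) (deriv (deriv φ) t) t :=
    (hφ1.differentiable (by norm_num) t).hasDerivAt.sub_const A
  have hlow : ∀ t ∈ Set.Icc (-X) X, (1 - c₀) * A ≤ |deriv φ t - A| := fun t ht => by
    have h := (abs_le.1 (h1 t ht)).2
    rw [abs_of_nonpos] <;> nlinarith
  have hpos : 0 < (1 - c₀) * A := by positivity
  have hne : ∀ t ∈ Set.Icc (-X) X, deriv φ t - A ≠ 0 := fun t ht =>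
    abs_pos.1 (hpos.trans_le (hlow t ht))
  set F : ℝ → ℂ := fun t => e (φ t - A * t) / (2 * Real.pi * Complex.I * ↑(deriv φ t - A)) with hF
  set G : ℝ → ℂ := fun t => e (φ t - A * t) * ↑(deriv (deriv φ) t) /
    (2 * Real.pi * Complex.I * ↑(deriv φ t - A) ^ 2) with hG
  have hpiC : (Real.pi : ℂ) ≠ 0 := by exact_mod_cast hpi.ne'
  have hFd : ∀ t ∈ Set.uIcc (-X) X, HasDerivAt F (e (φ t - A * t) - G t) t := by
    intro t ht
    rw [Set.uIcc_of_le hX'] at ht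
    have hnC : ((deriv φ t - A : ℝ) : ℂ) ≠ 0 := by exact_mod_cast hne t ht
    have hden : (2 * Real.pi * Complex.I * ↑(deriv φ t - A) : ℂ) ≠ 0 := by
      simp only [ne_eq, mul_eq_zero, not_or]
      exact ⟨⟨⟨two_ne_zero, hpiC⟩, Complex.I_ne_zero⟩, hnC⟩
    refine ((hasDerivAt_e_comp (hd0 t)).fun_div
      ((hd1 t).ofReal_comp.const_mul (2 * Real.pi * Complex.I : ℂ)) hden).congr_deriv ?_
    simp only [hG]
    generalize ((deriv φ t - A : ℝ) : ℂ) = y at *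
    have := Complex.I_ne_zero
    field_simp
  have hce : Continuous fun t => e (φ t - A * t) :=
    continuous_iff_continuousAt.2 fun t => (hasDerivAt_e_comp (hd0 t)).continuousAt
  have hcG : ContinuousOn G (Set.uIcc (-X) X) := by
    rw [Set.uIcc_of_le hX']
    refine ContinuousOn.div (by fun_prop) (by fun_prop) fun t ht => ?_
    have hnC : ((deriv φ t - A : ℝ) : ℂ) ≠ 0 := by exact_mod_cast hne t ht
    simp only [ne_eq, mul_eq_zero, not_or]
    exact ⟨⟨⟨two_ne_zero, hpiC⟩, Complex.I_ne_zero⟩, pow_ne_zero 2 hnC⟩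
  have hie : IntervalIntegrable (fun t => e (φ t - A * t)) volume (-X) X :=
    hce.intervalIntegrable _ _
  have hiG : IntervalIntegrable G volume (-X) X := hcG.intervalIntegrable
  have key := intervalIntegral.integral_eq_sub_of_hasDerivAt hFd (hie.sub hiG)
  rw [intervalIntegral.integral_sub hie hiG, sub_eq_iff_eq_add] at key
  have hFn : ∀ t ∈ Set.Icc (-X) X, ‖F t‖ ≤ 1 / (2 * Real.pi * ((1 - c₀) * A)) := by
    intro t ht
    simp only [hF, norm_div, norm_mul, norm_e, Complex.norm_real, Complex.norm_I,
      Real.norm_eq_abs, abs_of_pos hpi, Complex.norm_ofNat, mul_one]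
    have := hlow t ht
    gcongr
  have hGn : ∀ t ∈ Set.Icc (-X) X,
      ‖G t‖ ≤ (C₀ * A / X) / (2 * Real.pi * ((1 - c₀) * A) ^ 2) := by
    intro t ht
    simp only [hG, norm_div, norm_mul, norm_pow, norm_e, Complex.norm_real, Complex.norm_I,
      Real.norm_eq_abs, abs_of_pos hpi, Complex.norm_ofNat, mul_one, one_mul]
    have := hlow t ht
    have := h2 t ht
    gcongr
  have hIG := intervalIntegral.norm_integral_le_of_norm_le_const (a := -X) (b := X) (f := G)
    (C := (C₀ * A / X) / (2 * Real.pi * ((1 - c₀) * A) ^ 2)) fun t ht => by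
      rw [Set.uIoc_of_le hX'] at ht
      exact hGn t (Set.Ioc_subset_Icc_self ht)
  have hXX : |X - -X| = 2 * X := by rw [abs_of_nonneg] <;> linarith
  rw [hXX] at hIG
  rw [key]
  calc ‖F X - F (-X) + ∫ t in (-X)..X, G t‖
      ≤ ‖F X‖ + ‖F (-X)‖ + ‖∫ t in (-X)..X, G t‖ :=
        (norm_add_le _ _).trans (by gcongr; exact norm_sub_le _ _)
    _ ≤ 1 / (2 * Real.pi * ((1 - c₀) * A)) + 1 / (2 * Real.pi * ((1 - c₀) * A)) +
        (C₀ * A / X) / (2 * Real.pi * ((1 - c₀) * A) ^ 2) * (2 * X) := by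
        gcongr
        · exact hFn X ⟨hX', le_rfl⟩
        · exact hFn (-X) ⟨le_rfl, hX'⟩
    _ = (C₀ + 1 - c₀) / ((1 - c₀) ^ 2 * Real.pi * A) := by
        field_simp
        ring
end

section
/- Let Ω be a finite set and Φ : Ω → ℂ. Let m ≥ 1 and G : Ω → ℤ^m, and let H = {G(ω) − G(ω') : (ω, ω') ∈ Ω²} ⊆ ℤ^m. Then |Σ_{ω ∈ Ω} Φ(ω)|² ≤ (#H) · ∫_{[0,1]^m} |Σ_{ω ∈ Ω} Φ(ω) e(β · G(ω))|² dβ. -/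
/-!
Group the sum over `Ω` by the value `g` of `G`: with `c g = ∑_{G ω = g} Φ ω` and `S = G(Ω)`,
Cauchy–Schwarz gives `|∑ Φ|² = |∑_{g ∈ S} c g|² ≤ #S · ∑_{g ∈ S} |c g|²`. By orthogonality of the
characters `β ↦ e(β · g)` on the unit cube (`parseval_cube`), the last sum is exactly the integral.
Finally `#S ≤ #H`, because `H` contains the translate `S - g₀` for any `g₀ ∈ S`.
-/

open MeasureTheory Finset

lemma e_add (x y : ℝ) : e (x + y) = e x * e y := by
  simp only [e, ← Complex.exp_add]
  congr 1
  push_cast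
  ring

lemma e_sum {ι : Type*} (s : Finset ι) (f : ι → ℝ) : e (∑ i ∈ s, f i) = ∏ i ∈ s, e (f i) := by
  simp only [e, ← Complex.exp_sum]
  congr 1
  push_cast
  rw [Finset.mul_sum]

lemma conj_e (x : ℝ) : (starRingEnd ℂ) (e x) = e (-x) := by
  simp only [e, ← Complex.exp_conj]
  congr 1
  simp [Complex.conj_ofNat]

lemma continuous_e : Continuous e := by
  unfold e
  fun_prop

lemma integral_e_unit (n : ℤ) :
    ∫ x in Set.Icc (0 : ℝ) 1, e (x * n) = if n = 0 then 1 else 0 := by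
  rw [integral_Icc_eq_integral_Ioc, ← intervalIntegral.integral_of_le zero_le_one]
  split_ifs with h
  · simp [h, e]
  · have hc : (2 * Real.pi * Complex.I * n : ℂ) ≠ 0 := by
      simp [h, Real.pi_ne_zero]
    have := integral_exp_mul_complex (a := 0) (b := 1) hc
    have h1 : Complex.exp (2 * Real.pi * Complex.I * n) = 1 := by
      rw [mul_comm]
      exact Complex.exp_int_mul_two_pi_mul_I n
    simp only [Complex.ofReal_one, mul_one, Complex.ofReal_zero, mul_zero, h1, Complex.exp_zero,
      sub_self, zero_div] at this
    rw [← this]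
    congr 1
    ext x
    simp only [e]
    congr 1
    push_cast
    ring

lemma integral_e_cube {m : ℕ} (h : Fin m → ℤ) :
    ∫ β in Set.Icc (0 : Fin m → ℝ) 1, e (∑ i, β i * (h i : ℝ)) = if h = 0 then 1 else 0 := by
  simp only [e_sum]
  rw [← Set.pi_univ_Icc, volume_pi, Measure.restrict_pi_pi,
    integral_fintype_prod_eq_prod (fun i (x : ℝ) => e (x * (h i : ℝ)))]
  simp only [Pi.zero_apply, Pi.one_apply, integral_e_unit]
  rw [Finset.prod_ite_zero]
  simp [funext_iff]

lemma parseval_cube {m : ℕ} (S : Finset (Fin m → ℤ)) (c : (Fin m → ℤ) → ℂ) :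
    ∫ β in Set.Icc (0 : Fin m → ℝ) 1, ‖∑ g ∈ S, c g * e (∑ i, β i * (g i : ℝ))‖ ^ 2 =
      ∑ g ∈ S, ‖c g‖ ^ 2 := by
  apply Complex.ofReal_injective
  rw [← integral_complex_ofReal]
  have expand (β : Fin m → ℝ) :
      ((‖∑ g ∈ S, c g * e (∑ i, β i * (g i : ℝ))‖ ^ 2 : ℝ) : ℂ) =
        ∑ g ∈ S, ∑ g' ∈ S, c g * (starRingEnd ℂ) (c g') *
          e (∑ i, β i * ((g - g') i : ℤ)) := by
    push_cast
    rw [← Complex.mul_conj', map_sum, Finset.sum_mul_sum]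
    refine Finset.sum_congr rfl fun g _ => Finset.sum_congr rfl fun g' _ => ?_
    have : ∑ i, β i * (((g - g') i : ℤ) : ℝ) =
        ∑ i, β i * (g i : ℝ) + -∑ i, β i * (g' i : ℝ) := by
      rw [← Finset.sum_neg_distrib, ← Finset.sum_add_distrib]
      refine Finset.sum_congr rfl fun i _ => ?_
      simp only [Pi.sub_apply]
      push_cast
      ring
    rw [this, e_add, map_mul, conj_e]
    ring
  have integrable (g g' : Fin m → ℤ) : IntegrableOn
      (fun β : Fin m → ℝ => c g * (starRingEnd ℂ) (c g') * e (∑ i, β i * ((g - g') i : ℤ)))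
      (Set.Icc 0 1) := by
    refine Continuous.integrableOn_Icc ?_
    exact continuous_const.mul (continuous_e.comp (by fun_prop))
  simp only [expand]
  rw [integral_finsetSum _ fun g _ => integrable_finsetSum _ fun g' _ => integrable g g']
  push_cast
  refine Finset.sum_congr rfl fun g hg => ?_
  rw [integral_finsetSum _ fun g' _ => integrable g g']
  simp only [integral_const_mul, integral_e_cube, sub_eq_zero]
  simp [hg, Complex.mul_conj']

theorem stmt11 (Ω : Type*) [Fintype Ω] (Φ : Ω → ℂ) (m : ℕ) (hm : 1 ≤ m)
    (G : Ω → Fin m → ℤ) :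
    ‖∑ ω, Φ ω‖ ^ 2 ≤
      (Set.ncard {h : Fin m → ℤ | ∃ ω ω' : Ω, G ω - G ω' = h} : ℝ) *
        ∫ β in Set.Icc (0 : Fin m → ℝ) 1,
          ‖∑ ω, Φ ω * e (∑ i, β i * (G ω i : ℝ))‖ ^ 2 := by
  classical
  set H : Set (Fin m → ℤ) := {h | ∃ ω ω' : Ω, G ω - G ω' = h} with hH
  set S : Finset (Fin m → ℤ) := Finset.univ.image G with hS
  set c : (Fin m → ℤ) → ℂ := fun g => ∑ ω with G ω = g, Φ ω with hc
  have mapsTo : ∀ ω ∈ (Finset.univ : Finset Ω), G ω ∈ S := fun ω _ => by simp [hS]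
  have group (f : (Fin m → ℤ) → ℂ) : ∑ ω, Φ ω * f (G ω) = ∑ g ∈ S, c g * f g := by
    rw [← Finset.sum_fiberwise_of_maps_to mapsTo]
    refine Finset.sum_congr rfl fun g _ => ?_
    rw [hc, Finset.sum_mul]
    refine Finset.sum_congr rfl fun ω hω => ?_
    rw [(Finset.mem_filter.mp hω).2]
  have hint : ∫ β in Set.Icc (0 : Fin m → ℝ) 1,
      ‖∑ ω, Φ ω * e (∑ i, β i * (G ω i : ℝ))‖ ^ 2 = ∑ g ∈ S, ‖c g‖ ^ 2 := by
    rw [← parseval_cube]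
    congr 1
    ext β
    rw [group fun g => e (∑ i, β i * (g i : ℝ))]
  have hsum : ∑ ω, Φ ω = ∑ g ∈ S, c g := by simpa using group fun _ => 1
  have card_le : S.card ≤ H.ncard := by
    rcases isEmpty_or_nonempty Ω with _ | ⟨⟨ω₀⟩⟩
    · simp [hS]
    · have hfin : H.Finite :=
        (Set.finite_range fun p : Ω × Ω => G p.1 - G p.2).subset fun h ⟨ω, ω', hh⟩ =>
          ⟨(ω, ω'), hh⟩
      rw [← Set.ncard_coe_finset]
      refine Set.ncard_le_ncard_of_injOn (fun g => g - G ω₀) ?_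
        (fun a _ b _ hab => sub_left_injective hab) hfin
      intro g hg
      obtain ⟨ω, -, rfl⟩ := Finset.mem_image.mp (Finset.mem_coe.mp hg)
      exact ⟨ω, ω₀, rfl⟩
  rw [hint, hsum]
  calc ‖∑ g ∈ S, c g‖ ^ 2 ≤ (∑ g ∈ S, ‖c g‖) ^ 2 := by
        gcongr
        exact norm_sum_le _ _
    _ ≤ S.card * ∑ g ∈ S, ‖c g‖ ^ 2 := sq_sum_le_card_mul_sum_sq
    _ ≤ H.ncard * ∑ g ∈ S, ‖c g‖ ^ 2 := by gcongr
end
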